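/- Let L be the centerless twisted N=2 superconformal algebra, V = L ⊗ L the L-module under the adjoint diagonal action, and let d₀ be an even homogeneous super-derivation from L to V of degree 0 with respect to the (1/2)ℤ-grading such that d₀(L_i) = 0 for all i ∈ ℤ and d₀(G_r) = 0 for all r ∈ 1/2 + ℤ. Then d₀(G_0) = 0 and d₀(T_{1/2}) = 0, and consequently d₀ = 0 on all of L. -/

import Mathlib

namespace N2

/-- Basis indices of the centerless twisted N=2 superconformal algebra:
`L m` is the Virasoro generator `L_m` (`m ∈ ℤ`),
`T k` is the Heisenberg generator `T_{k+1/2}` (`k ∈ ℤ`, index in `1/2 + ℤ`),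
`G n` is the fermionic generator `G_{n/2}` (`n ∈ ℤ`, index in `(1/2)ℤ`). -/
inductive Idx : Type
  | L : ℤ → Idx
  | T : ℤ → Idx
  | G : ℤ → Idx
  deriving DecidableEq

noncomputable section

/-- The centerless twisted N=2 superconformal algebra `𝓛`, as the free
complex vector space on the basis `{L_m, T_r, G_p}`. -/
abbrev Lsa : Type := Idx →₀ ℂ

/-- `𝓛 ⊗ 𝓛`, realized as the free complex vector space on pairs of basis indices. -/
abbrev V : Type := (Idx × Idx) →₀ ℂ

/-- `𝓛 ⊗ 𝓛 ⊗ 𝓛`. -/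
abbrev W : Type := (Idx × Idx × Idx) →₀ ℂ

/-- the basis vector indexed by `i`. -/
def e (i : Idx) : Lsa := Finsupp.single i 1

/-- the ℤ₂-parity of the basis elements: `L_m, T_r` are even, `G_p` is odd. -/
def par : Idx → ZMod 2
  | .L _ => 0
  | .T _ => 0
  | .G _ => 1

/-- the sign `(-1)^p` for `p ∈ ℤ₂`. -/
def sgn (p : ZMod 2) : ℂ := if p = 0 then 1 else -1

/-- the `(1/2)ℤ`-degree of a basis element, as a rational number:
`L_m ↦ m`, `T_{k+1/2} ↦ k + 1/2`, `G_{n/2} ↦ n/2`. -/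
def qdeg : Idx → ℚ
  | .L m => (m : ℚ)
  | .T k => (k : ℚ) + 1/2
  | .G n => (n : ℚ) / 2

/-- The super-bracket of `𝓛` on basis elements:
`[L_m, L_n] = (m-n) L_{m+n}`, `[L_m, T_r] = -r T_{r+m}`, `[T_r, T_s] = 0`,
`[L_m, G_p] = (m/2 - p) G_{p+m}`, `[T_r, G_p] = G_{p+r}`,
`[G_p, G_q] = (-1)^{2p} 2 L_{p+q}` if `p+q ∈ ℤ` and
`[G_p, G_q] = (-1)^{2p+1} (p-q) T_{p+q}` if `p+q ∈ 1/2+ℤ`,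
together with the super skew-symmetric counterparts. -/
def bk : Idx → Idx → Lsa
  | .L m, .L n => ((m : ℂ) - n) • e (.L (m + n))
  | .L m, .T k => (-((k : ℂ) + 1/2)) • e (.T (k + m))
  | .L m, .G n => (((m : ℂ) - n) / 2) • e (.G (n + 2*m))
  | .T k, .L m => ((k : ℂ) + 1/2) • e (.T (k + m))
  | .T _, .T _ => 0
  | .T k, .G n => e (.G (n + 2*k + 1))
  | .G n, .L m => (-((m : ℂ) - n) / 2) • e (.G (n + 2*m))
  | .G n, .T k => - e (.G (n + 2*k + 1))
  | .G n, .G n' =>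
      if (n + n') % 2 = 0 then
        ((-1 : ℂ) ^ n * 2) • e (.L ((n + n') / 2))
      else
        ((-1 : ℂ) ^ (n + 1) * (((n : ℂ) - n') / 2)) • e (.T ((n + n' - 1) / 2))

/-- the bracket of `𝓛`, extended bilinearly to all of `𝓛`. -/
def br (x y : Lsa) : Lsa :=
  x.sum fun i a => y.sum fun j b => (a * b) • bk i j

/-- the adjoint diagonal action of `𝓛` on `𝓛 ⊗ 𝓛`:
`x ∗ (a ⊗ b) = [x,a] ⊗ b + (-1)^{[x][a]} a ⊗ [x,b]`. -/
def act2 (x : Lsa) (v : V) : V :=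
  x.sum fun i a => v.sum fun p c =>
    (a * c) •
      (((bk i p.1).sum fun k t => Finsupp.single (k, p.2) t)
        + sgn (par i * par p.1) • ((bk i p.2).sum fun k t => Finsupp.single (p.1, k) t))

/-- the adjoint diagonal action of `𝓛` on `𝓛 ⊗ 𝓛 ⊗ 𝓛`. -/
def act3 (x : Lsa) (w : W) : W :=
  x.sum fun i a => w.sum fun p c =>
    (a * c) •
      (((bk i p.1).sum fun k t => Finsupp.single (k, p.2.1, p.2.2) t)
        + sgn (par i * par p.1) •
            ((bk i p.2.1).sum fun k t => Finsupp.single (p.1, k, p.2.2) t)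
        + sgn (par i * (par p.1 + par p.2.1)) •
            ((bk i p.2.2).sum fun k t => Finsupp.single (p.1, p.2.1, k) t))

/-- the adjoint diagonal action of `𝓛` on the `n`-fold tensor power `𝓛^{⊗n}`,
realized as the free complex vector space on `n`-tuples of basis indices:
`x ∗ (a₁ ⊗ ⋯ ⊗ aₙ) = Σ_k (-1)^{[x]([a₁]+⋯+[a_{k-1}])} a₁ ⊗ ⋯ ⊗ [x,a_k] ⊗ ⋯ ⊗ aₙ`. -/
def actN (n : ℕ) (x : Lsa) (v : (Fin n → Idx) →₀ ℂ) : (Fin n → Idx) →₀ ℂ :=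
  x.sum fun i a => v.sum fun f c =>
    (a * c) •
      (Finset.univ.sum fun k : Fin n =>
        sgn (par i * ((Finset.univ.filter fun l => l < k).sum fun l => par (f l))) •
          ((bk i (f k)).sum fun j t => Finsupp.single (Function.update f k j) t))

/-- the super-twist map `τ : 𝓛 ⊗ 𝓛 → 𝓛 ⊗ 𝓛`, `τ(x ⊗ y) = (-1)^{[x][y]} y ⊗ x`. -/
def tau (v : V) : V :=
  v.sum fun p c => (sgn (par p.1 * par p.2) * c) • Finsupp.single (p.2, p.1) 1

/-- the image `Im(1⊗1 - τ) ⊂ 𝓛 ⊗ 𝓛`. -/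
def ImOneSubTau : Set V := Set.range fun v : V => v - tau v

/-- the super-cyclic map `ξ` on `𝓛 ⊗ 𝓛 ⊗ 𝓛`:
`ξ(x₁ ⊗ x₂ ⊗ x₃) = (-1)^{[x₁]([x₂]+[x₃])} x₂ ⊗ x₃ ⊗ x₁`. -/
def xi (w : W) : W :=
  w.sum fun p c =>
    (sgn (par p.1 * (par p.2.1 + par p.2.2)) * c) • Finsupp.single (p.2.1, p.2.2, p.1) 1

/-- `c(r) = [r¹², r¹³] + [r¹², r²³] + [r¹³, r²³] ∈ 𝓛 ⊗ 𝓛 ⊗ 𝓛` for `r ∈ 𝓛 ⊗ 𝓛`. -/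
def cYB (r : V) : W :=
  r.sum fun p a => r.sum fun q b =>
    (a * b) •
      (sgn (par q.1 * par p.2) •
          ((bk p.1 q.1).sum fun k t => Finsupp.single (k, p.2, q.2) t)
        + ((bk p.2 q.1).sum fun k t => Finsupp.single (p.1, k, q.2) t)
        + sgn (par q.1 * par p.2) •
            ((bk p.2 q.2).sum fun k t => Finsupp.single (p.1, q.1, k) t))

/-- `1 ⊗ D : 𝓛 ⊗ 𝓛 → 𝓛 ⊗ 𝓛 ⊗ 𝓛` for an even map `D : 𝓛 → 𝓛 ⊗ 𝓛`. -/
def oneTensorMap (D : Lsa → V) (v : V) : W :=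
  v.sum fun p c => c • ((D (e p.2)).sum fun q t => Finsupp.single (p.1, q.1, q.2) t)

/-- `r ∈ 𝓛 ⊗ 𝓛` is homogeneous of parity `ε ∈ ℤ₂`. -/
def IsParityV (ε : ZMod 2) (r : V) : Prop := ∀ p ∈ r.support, par p.1 + par p.2 = ε

/-- `r ∈ 𝓛 ⊗ 𝓛` is even (degree `0̄`). -/
def IsEvenV (r : V) : Prop := IsParityV 0 r

/-- `r` lies in the graded component `V_ι = Σ_{j+k=ι} 𝓛_j ⊗ 𝓛_k` of `V = 𝓛 ⊗ 𝓛`. -/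
def IsDegV (ι : ℚ) (r : V) : Prop := ∀ p ∈ r.support, qdeg p.1 + qdeg p.2 = ι

/-- the linear map `𝓛 → M` with the prescribed values on the basis. -/
def ofBasis {M : Type*} [AddCommMonoid M] [Module ℂ M] (g : Idx → M) : Lsa →ₗ[ℂ] M :=
  Finsupp.lsum ℂ fun i => LinearMap.toSpanSingleton ℂ M (g i)

/-- the inner super-derivation `a_inn` attached to `a ∈ 𝓛 ⊗ 𝓛` of parity `ε`:
`a_inn(x) = (-1)^{[a][x]} x ∗ a` for homogeneous `x`, extended linearly. -/
def innMap (ε : ZMod 2) (a : V) : Lsa →ₗ[ℂ] V :=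
  ofBasis fun i => sgn (ε * par i) • act2 (e i) a

/-- `d : 𝓛 → 𝓛 ⊗ 𝓛` is a super-derivation of parity `ε`:
`d(𝓛_ī) ⊆ V_{ī+ε}` and
`d([x,y]) = (-1)^{[d][x]} x ∗ d(y) - (-1)^{[y]([d]+[x])} y ∗ d(x)`
for homogeneous `x, y` (stated on basis elements and extended bilinearly). -/
def IsDerOfParity (ε : ZMod 2) (d : Lsa →ₗ[ℂ] V) : Prop :=
  (∀ i : Idx, IsParityV (par i + ε) (d (e i))) ∧
  (∀ i j : Idx,
    d (bk i j)
      = sgn (ε * par i) • act2 (e i) (d (e j))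
        - sgn (par j * (ε + par i)) • act2 (e j) (d (e i)))

/-- `d` is homogeneous of degree `ι ∈ (1/2)ℤ` with respect to the `(1/2)ℤ`-grading:
`d(𝓛_j) ⊆ V_{ι+j}`. -/
def IsDegHomogDer (ι : ℚ) (d : Lsa →ₗ[ℂ] V) : Prop :=
  ∀ i : Idx, IsDegV (ι + qdeg i) (d (e i))

/-- `D : 𝓛 → 𝓛 ⊗ 𝓛` defines a Lie super-bialgebra structure on `𝓛`: it is linear,
`D(𝓛_ī) ⊆ Σ_j 𝓛_j̄ ⊗ 𝓛_{ī-j̄}`, `Im D ⊆ Im(1⊗1-τ)`,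
`(1⊗1⊗1 + ξ + ξ²)(1 ⊗ D)D = 0`, and
`D([x,y]) = x ∗ D(y) - (-1)^{[x][y]} y ∗ D(x)`. -/
structure IsLieSuperBialgebraDelta (D : Lsa → V) : Prop where
  linear : IsLinearMap ℂ D
  parity : ∀ i : Idx, IsParityV (par i) (D (e i))
  skewIm : ∀ x : Lsa, D x ∈ ImOneSubTau
  coJacobi : ∀ x : Lsa,
    oneTensorMap D (D x) + xi (oneTensorMap D (D x)) + xi (xi (oneTensorMap D (D x))) = 0
  cocycle : ∀ i j : Idx,
    D (bk i j) = act2 (e i) (D (e j)) - sgn (par i * par j) • act2 (e j) (D (e i))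

/-!
Let `a ⊗ b` occur in `v ∈ 𝓛 ⊗ 𝓛`, and let `n` avoid a finite set depending on `v`. In
`L_{-n} ∗ (L_n ∗ v)`, the term obtained by raising the first factor of `a ⊗ b` by `n` and lowering
the second by `n` is nonzero and is cancelled by no other term, yet its index is not in the support
of `v`. Hence no nonzero `v` satisfies `L_{-n} ∗ (L_n ∗ v) ∈ ℂ v` for infinitely many `n`.
A derivation killing every `L_m` intertwines the actions of the `L_m` on `𝓛` and on `𝓛 ⊗ 𝓛`, and
each basis vector of `𝓛` is an eigenvector of `ad L_{-n} ∘ ad L_n`, so its image is zero.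
-/

open Filter

/-- The shift of basis indices by integer degrees: up to a scalar, `[L_m, ·]` sends the basis
vector indexed by `x` to the one indexed by `m +ᵥ x`. The index of `G` counts half-degrees, hence
is shifted by `2 * m`. -/
instance : AddAction ℤ Idx where
  vadd m
    | .L k => .L (k + m)
    | .T k => .T (k + m)
    | .G n => .G (n + 2 * m)
  zero_vadd x := by cases x <;> simp [HVAdd.hVAdd]
  add_vadd m n x := by cases x <;> simp [HVAdd.hVAdd] <;> ring

lemma vadd_L (m k : ℤ) : m +ᵥ Idx.L k = .L (k + m) := rfl

lemma vadd_T (m k : ℤ) : m +ᵥ Idx.T k = .T (k + m) := rfl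

lemma vadd_G (m n : ℤ) : m +ᵥ Idx.G n = .G (n + 2 * m) := rfl

lemma vadd_left_injective (x : Idx) : Function.Injective fun m : ℤ => m +ᵥ x := by
  intro m n h
  cases x <;> simpa [vadd_L, vadd_T, vadd_G] using h

/-- The structure constant of the bracket with `L_m` on the basis:
`[L_m, e x] = wittCoeff m x • e (m +ᵥ x)`. -/
def wittCoeff (m : ℤ) : Idx → ℂ
  | .L n => (m : ℂ) - n
  | .T k => -((k : ℂ) + 1 / 2)
  | .G n => ((m : ℂ) - n) / 2

lemma bk_L (m : ℤ) (x : Idx) : bk (.L m) x = wittCoeff m x • e (m +ᵥ x) := by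
  cases x <;> simp [bk, wittCoeff, vadd_L, vadd_T, vadd_G, add_comm]

lemma intCast_add_half_ne_zero (k : ℤ) : (k : ℂ) + 1 / 2 ≠ 0 := by
  intro h
  have h_odd : ((2 * k + 1 : ℤ) : ℂ) = 0 := by push_cast; linear_combination 2 * h
  have : 2 * k + 1 = 0 := Int.cast_eq_zero.1 h_odd
  omega

lemma eventually_wittCoeff_ne_zero (x : Idx) : ∀ᶠ m in cofinite, wittCoeff m x ≠ 0 := by
  cases x with
  | T k => exact .of_forall fun _ => neg_ne_zero.2 (intCast_add_half_ne_zero k)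
  | L n | G n =>
    filter_upwards [eventually_cofinite_ne n] with m hm
    simpa [wittCoeff, sub_eq_zero] using hm

lemma act2_zero (x : Lsa) : act2 x 0 = 0 := by
  simp [act2]

lemma act2_add (x : Lsa) (v w : V) : act2 x (v + w) = act2 x v + act2 x w := by
  simp only [act2, ← Finsupp.sum_add]
  refine Finsupp.sum_congr fun i _ => Finsupp.sum_add_index' (by simp) fun p c₁ c₂ => ?_
  rw [mul_add, add_smul]

lemma act2_smul (x : Lsa) (c : ℂ) (v : V) : act2 x (c • v) = c • act2 x v := by
  simp only [act2, Finsupp.smul_sum]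
  refine Finsupp.sum_congr fun i _ => ?_
  rw [Finsupp.sum_smul_index (by simp)]
  simp only [smul_smul, mul_left_comm]

lemma act2_L_single (m : ℤ) (x y : Idx) (c : ℂ) :
    act2 (e (.L m)) (.single (x, y) c)
      = .single (m +ᵥ x, y) (wittCoeff m x * c) + .single (x, m +ᵥ y) (wittCoeff m y * c) := by
  simp [act2, e, bk_L, par, sgn, mul_comm c]

lemma act2_L_apply (m : ℤ) (v : V) (a b : Idx) :
    act2 (e (.L m)) v (a, b)
      = wittCoeff m (-m +ᵥ a) * v (-m +ᵥ a, b) + wittCoeff m (-m +ᵥ b) * v (a, -m +ᵥ b) := by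
  induction v using Finsupp.induction_linear with
  | zero => simp [act2_zero]
  | add v w hv hw =>
    simp only [act2_add, Finsupp.add_apply, hv, hw]
    ring
  | single p c =>
    obtain ⟨x, y⟩ := p
    simp only [act2_L_single, Finsupp.add_apply, Finsupp.single_apply, Prod.mk.injEq,
      ← eq_neg_vadd_iff]
    grind

lemma eventually_apply_vadd_eq_zero (v : V) (a : Idx) :
    ∀ᶠ n : ℤ in cofinite, ∀ b, v (n +ᵥ a, b) = 0 := by
  have h_fst : ∀ᶠ x in cofinite, x ∉ v.support.image Prod.fst :=
    (v.support.image Prod.fst).eventually_cofinite_notMem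
  filter_upwards [(vadd_left_injective a).tendsto_cofinite.eventually h_fst] with n hn b
  by_contra hb
  exact hn (Finset.mem_image_of_mem Prod.fst (Finsupp.mem_support_iff.2 hb))

lemma eq_zero_of_frequently_act2_L_neg_act2_L_eq_smul {v : V}
    (h : ∃ᶠ n : ℤ in cofinite, ∃ c : ℂ, act2 (e (.L (-n))) (act2 (e (.L n)) v) = c • v) :
    v = 0 := by
  ext ⟨a, b⟩
  have h_two : ∀ᶠ n : ℤ in cofinite, ∀ b, v ((2 * n) +ᵥ a, b) = 0 :=
    (mul_right_injective₀ (two_ne_zero' ℤ)).tendsto_cofinite.eventually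
      (eventually_apply_vadd_eq_zero v a)
  have h_neg : ∀ᶠ n : ℤ in cofinite, wittCoeff (-n) b ≠ 0 :=
    neg_injective.tendsto_cofinite.eventually (eventually_wittCoeff_ne_zero b)
  obtain ⟨n, ⟨c, hc⟩, hv, hv_two, ha, hb⟩ := (h.and_eventually
    ((eventually_apply_vadd_eq_zero v a).and
      (h_two.and ((eventually_wittCoeff_ne_zero a).and h_neg)))).exists
  have h_coeff : wittCoeff (-n) b * (wittCoeff n a * v (a, b)) = 0 := by
    have h_eval := DFunLike.congr_fun hc (n +ᵥ a, -n +ᵥ b)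
    have h_shift : -n + 2 * n = n := by ring
    simpa only [act2_L_apply, Finsupp.smul_apply, neg_neg, neg_add_cancel, add_neg_cancel,
      vadd_vadd, zero_vadd, ← two_mul, h_shift, hv, hv_two, smul_zero, mul_zero, zero_add,
      add_zero] using h_eval
  simpa [ha, hb] using h_coeff

lemma eq_zero_of_map_bk_L {d : Lsa →ₗ[ℂ] V}
    (h : ∀ (m : ℤ) (i : Idx), d (bk (.L m) i) = act2 (e (.L m)) (d (e i))) : d = 0 := by
  refine Finsupp.lhom_ext' fun i => LinearMap.ext_ring ?_
  change d (e i) = 0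
  refine eq_zero_of_frequently_act2_L_neg_act2_L_eq_smul (.of_forall fun n =>
    ⟨wittCoeff n i * wittCoeff (-n) (n +ᵥ i), ?_⟩)
  calc act2 (e (.L (-n))) (act2 (e (.L n)) (d (e i)))
      = wittCoeff n i • act2 (e (.L (-n))) (d (e (n +ᵥ i))) := by
        rw [← h, bk_L, map_smul, act2_smul]
    _ = (wittCoeff n i * wittCoeff (-n) (n +ᵥ i)) • d (e i) := by
        rw [← h, bk_L, map_smul, neg_vadd_vadd, smul_smul]

lemma IsDerOfParity.map_bk_L {ε : ZMod 2} {d : Lsa →ₗ[ℂ] V} (hd : IsDerOfParity ε d) {m : ℤ}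
    (hm : d (e (.L m)) = 0) (i : Idx) : d (bk (.L m) i) = act2 (e (.L m)) (d (e i)) := by
  simpa [hm, act2_zero, par, sgn] using hd.2 (.L m) i

theorem even_deg_zero_der_vanishes_general {ε : ZMod 2} (d : Lsa →ₗ[ℂ] V)
    (hd : IsDerOfParity ε d) (hL : ∀ m : ℤ, d (e (Idx.L m)) = 0) : d = 0 :=
  eq_zero_of_map_bk_L fun m => hd.map_bk_L (hL m)

/-- If an even homogeneous super-derivation `d₀ : 𝓛 → V = 𝓛 ⊗ 𝓛` of degree `0`
kills all `L_i` (`i ∈ ℤ`) and all `G_r` (`r ∈ 1/2 + ℤ`, encoded by odd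
integers `2k + 1`), then `d₀(G_0) = 0` and `d₀(T_{1/2}) = 0` (here `T_{1/2}`
is `Idx.T 0`), and consequently `d₀ = 0` on all of `𝓛`. -/
theorem even_deg_zero_der_vanishes (d : Lsa →ₗ[ℂ] V)
    (hd : IsDerOfParity 0 d) (hhom : IsDegHomogDer 0 d)
    (hL : ∀ m : ℤ, d (e (Idx.L m)) = 0)
    (hG : ∀ k : ℤ, d (e (Idx.G (2 * k + 1))) = 0) :
    d (e (Idx.G 0)) = 0 ∧ d (e (Idx.T 0)) = 0 ∧ d = 0 := by
  have hd_zero : d = 0 := even_deg_zero_der_vanishes_general d hd hL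
  simp [hd_zero]

end
end N2
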